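/- arXiv:0709.3821 — 2 statements merged into one kernel-verified Lean document; each statement's English description precedes it below -/
import Mathlib

section
/- For all natural numbers x ≤ y, S_{5,0}(32y) − S_{5,0}(32x) = 5·(S_{5,0}(2y) − S_{5,0}(2x)); equivalently, S_{5,0}([32x,32y)) = 5·S_{5,0}([2x,2y)). -/
/-- The Newman sum `S_{m,l}(x) = ∑_{0 ≤ n < x, n ≡ l (mod m)} (-1)^{σ(n)}`,
where `σ(n)` is the sum of the binary digits of `n`. -/
def newmanSum (m l x : ℕ) : ℤ :=
  ∑ n ∈ Finset.range x, if n % m = l then (-1 : ℤ) ^ ((Nat.digits 2 n).sum) else 0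

/-! Twist the Thue–Morse signs by a `p`-th root of unity `ζ`. Splitting `n` into even and odd gives
`∑_{n < 2x} (-1)^σ(n) ζ^n = (1 - ζ) ∑_{n < x} (-1)^σ(n) ζ^(2n)`. After `p - 1` iterations the twist
is `ζ ^ 2 ^ (p - 1) = ζ` again. If `2` is a primitive root modulo `p` and `ζ ≠ 1`, the factors
collected are the `1 - ω` for all primitive `p`-th roots of unity `ω`, with product `Φ_p(1) = p`;
if `ζ = 1`, twisted sums of even length vanish. So passing from length `2x` to `2^p x` multiplies
every discrete Fourier coefficient of `l ↦ S_{p,l}` by `p`, hence also `S_{p,l}` itself. -/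

open Finset

/-- The sign `(-1)^{σ(n)}`, where `σ(n)` is the sum of the binary digits of `n`: the Thue–Morse
sequence with values `±1`. -/
def thueMorseSign (n : ℕ) : ℤ :=
  (-1) ^ (Nat.digits 2 n).sum

theorem thueMorseSign_two_mul (n : ℕ) : thueMorseSign (2 * n) = thueMorseSign n := by
  rcases Nat.eq_zero_or_pos n with rfl | hn
  · rfl
  · simp [thueMorseSign, Nat.digits_base_mul one_lt_two hn]

theorem thueMorseSign_two_mul_add_one (n : ℕ) :
    thueMorseSign (2 * n + 1) = -thueMorseSign n := by
  have hdigits : Nat.digits 2 (2 * n + 1) = 1 :: Nat.digits 2 n := by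
    rw [add_comm, Nat.digits_add 2 one_lt_two 1 n one_lt_two (.inl one_ne_zero)]
  rw [thueMorseSign, hdigits, List.sum_cons, pow_add, pow_one, neg_one_mul, thueMorseSign]

section TwistedSum

variable {R : Type*} [CommRing R]

/-- The twisted Thue–Morse sum `∑_{n < x} (-1)^{σ(n)} ζ^n`. For `ζ` running through the `m`-th roots
of unity, these are the discrete Fourier coefficients of the Newman sums modulo `m`. -/
def twistedThueMorseSum (ζ : R) (x : ℕ) : R :=
  ∑ n ∈ range x, thueMorseSign n * ζ ^ n

theorem twistedThueMorseSum_two_mul (ζ : R) (x : ℕ) :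
    twistedThueMorseSum ζ (2 * x) = (1 - ζ) * twistedThueMorseSum (ζ ^ 2) x := by
  induction x with
  | zero => simp [twistedThueMorseSum]
  | succ x ih =>
    simp only [twistedThueMorseSum] at ih ⊢
    rw [mul_add_one, sum_range_succ, sum_range_succ, ih, sum_range_succ,
      thueMorseSign_two_mul, thueMorseSign_two_mul_add_one]
    push_cast
    ring

theorem twistedThueMorseSum_one_two_mul (x : ℕ) :
    twistedThueMorseSum (1 : R) (2 * x) = 0 := by
  rw [twistedThueMorseSum_two_mul, sub_self, zero_mul]

theorem twistedThueMorseSum_two_pow_mul (ζ : R) (k x : ℕ) :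
    twistedThueMorseSum ζ (2 ^ k * x) =
      (∏ i ∈ range k, (1 - ζ ^ 2 ^ i)) * twistedThueMorseSum (ζ ^ 2 ^ k) x := by
  induction k generalizing x with
  | zero => simp
  | succ k ih =>
    rw [pow_succ, mul_assoc, ih, twistedThueMorseSum_two_mul, prod_range_succ, mul_assoc, ← pow_mul]

end TwistedSum

section PrimitiveRoot

variable {n g : ℕ} [NeZero n]

theorem injOn_pow_pow_of_isPrimitiveRoot {M : Type*} [CommMonoid M] {ζ : M}
    (hζ : IsPrimitiveRoot ζ n) :
    Set.InjOn (fun i ↦ ζ ^ g ^ i) (Set.Iio (orderOf (g : ZMod n))) := by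
  intro i hi j hj hij
  have hmod : g ^ i ≡ g ^ j [MOD n] :=
    hζ.eq_orderOf ▸ (hζ.isOfFinOrder (NeZero.ne n)).pow_eq_pow_iff_modEq.1 hij
  refine pow_injOn_Iio_orderOf hi hj ?_
  exact_mod_cast (ZMod.natCast_eq_natCast_iff _ _ _).2 hmod

variable {R : Type*} [CommRing R] [IsDomain R] {ζ : R}

theorem image_pow_pow_eq_primitiveRoots [DecidableEq R] (hζ : IsPrimitiveRoot ζ n)
    (hg : orderOf (g : ZMod n) = n.totient) :
    (range n.totient).image (fun i ↦ ζ ^ g ^ i) = primitiveRoots n R := by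
  have hn : 0 < n := NeZero.pos n
  have hcoprime : g.Coprime n := by
    rw [← ZMod.isUnit_iff_coprime]
    exact (orderOf_pos_iff.1 (hg ▸ Nat.totient_pos.2 hn)).isUnit
  apply eq_of_subset_of_card_le
  · refine image_subset_iff.2 fun i _ ↦ (mem_primitiveRoots hn).2 ?_
    exact hζ.pow_of_coprime _ (hcoprime.pow_left i)
  · have hinj : Set.InjOn (fun i ↦ ζ ^ g ^ i) (range n.totient) := by
      simpa only [coe_range, hg] using injOn_pow_pow_of_isPrimitiveRoot (g := g) hζ
    rw [hζ.card_primitiveRoots, card_image_of_injOn hinj, card_range]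

theorem prod_sub_pow_pow_eq_eval_cyclotomic (hζ : IsPrimitiveRoot ζ n)
    (hg : orderOf (g : ZMod n) = n.totient) (a : R) :
    ∏ i ∈ range n.totient, (a - ζ ^ g ^ i) = (Polynomial.cyclotomic n R).eval a := by
  classical
  have hinj : Set.InjOn (fun i ↦ ζ ^ g ^ i) (range n.totient) := by
    simpa only [coe_range, hg] using injOn_pow_pow_of_isPrimitiveRoot (g := g) hζ
  rw [Polynomial.cyclotomic_eq_prod_X_sub_primitiveRoots hζ, Polynomial.eval_prod,
    ← image_pow_pow_eq_primitiveRoots hζ hg, prod_image hinj]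
  simp only [Polynomial.eval_sub, Polynomial.eval_X, Polynomial.eval_C]

end PrimitiveRoot

section Prime

variable {p : ℕ} [Fact p.Prime]

theorem prod_one_sub_pow_pow_eq_prime {R : Type*} [CommRing R] [IsDomain R] {ζ : R} {g : ℕ}
    (hζ : IsPrimitiveRoot ζ p) (hg : orderOf (g : ZMod p) = p - 1) :
    ∏ i ∈ range (p - 1), (1 - ζ ^ g ^ i) = p := by
  rw [← Nat.totient_prime Fact.out] at hg ⊢
  rw [prod_sub_pow_pow_eq_eval_cyclotomic hζ hg, Polynomial.eval_one_cyclotomic_prime]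

theorem twistedThueMorseSum_two_pow_prime_mul {R : Type*} [CommRing R] [IsDomain R] {ζ : R}
    (hζ : ζ ^ p = 1) (h2 : orderOf (2 : ZMod p) = p - 1) (x : ℕ) :
    twistedThueMorseSum ζ (2 ^ p * x) = p * twistedThueMorseSum ζ (2 * x) := by
  have hp : 2 ^ p = 2 ^ (p - 1) * 2 := (pow_sub_one_mul (NeZero.ne p) 2).symm
  rcases eq_or_ne ζ 1 with rfl | hζ_ne
  · rw [hp, mul_assoc, mul_left_comm, twistedThueMorseSum_one_two_mul,
      twistedThueMorseSum_one_two_mul, mul_zero]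
  · have hprim : IsPrimitiveRoot ζ p := IsPrimitiveRoot.iff_orderOf.2 (orderOf_eq_prime hζ hζ_ne)
    have htwist : ζ ^ 2 ^ (p - 1) = ζ := by
      have hmod : 2 ^ (p - 1) ≡ 1 [MOD p] := by
        rw [← ZMod.natCast_eq_natCast_iff]
        exact_mod_cast h2 ▸ pow_orderOf_eq_one (2 : ZMod p)
      rw [pow_eq_pow_mod _ hζ, hmod, ← pow_eq_pow_mod _ hζ, pow_one]
    rw [hp, mul_assoc, twistedThueMorseSum_two_pow_mul, htwist,
      prod_one_sub_pow_pow_eq_prime hprim (by exact_mod_cast h2)]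

end Prime

theorem dft_newmanSum (m : ℕ) [NeZero m] (x : ℕ) (k : ZMod m) :
    ZMod.dft (fun l : ZMod m ↦ (newmanSum m l.val x : ℂ)) k =
      twistedThueMorseSum (ZMod.stdAddChar (-k)) x := by
  have hresidue (n : ℕ) (l : ZMod m) : n % m = l.val ↔ (n : ZMod m) = l := by
    rw [← ZMod.val_natCast, (ZMod.val_injective m).eq_iff]
  have hterm (n : ℕ) :
      ∑ l : ZMod m, ZMod.stdAddChar (-(l * k)) *
          ((if n % m = l.val then thueMorseSign n else 0 : ℤ) : ℂ) =
        thueMorseSign n * ZMod.stdAddChar (-k) ^ n := by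
    simp [hresidue, ← AddChar.map_nsmul_eq_pow, mul_comm]
  calc
    ZMod.dft (fun l : ZMod m ↦ (newmanSum m l.val x : ℂ)) k
    _ = ∑ l : ZMod m, ∑ n ∈ range x, ZMod.stdAddChar (-(l * k)) *
          ((if n % m = l.val then thueMorseSign n else 0 : ℤ) : ℂ) := by
      simp only [ZMod.dft_apply, newmanSum, thueMorseSign, smul_eq_mul, Int.cast_sum, mul_sum]
    _ = ∑ n ∈ range x, thueMorseSign n * ZMod.stdAddChar (-k) ^ n := by
      rw [sum_comm]
      exact sum_congr rfl fun n _ ↦ hterm n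

theorem stmt_6_general {p : ℕ} (hp : p.Prime) (h2 : orderOf (2 : ZMod p) = p - 1)
    {l : ℕ} (hl : l < p) (x : ℕ) :
    newmanSum p l (2 ^ p * x) = p * newmanSum p l (2 * x) := by
  have : Fact p.Prime := ⟨hp⟩
  have hdft : (fun l : ZMod p ↦ (newmanSum p l.val (2 ^ p * x) : ℂ)) =
      (p : ℂ) • fun l : ZMod p ↦ (newmanSum p l.val (2 * x) : ℂ) := by
    apply ZMod.dft.injective
    ext k
    have hζ : (ZMod.stdAddChar (-k) : ℂ) ^ p = 1 := by
      rw [← AddChar.map_nsmul_eq_pow, nsmul_eq_mul, CharP.cast_eq_zero, zero_mul,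
        AddChar.map_zero_eq_one]
    rw [map_smul, Pi.smul_apply, dft_newmanSum, dft_newmanSum, smul_eq_mul,
      twistedThueMorseSum_two_pow_prime_mul hζ h2]
  have heval := congrFun hdft l
  simp only [Pi.smul_apply, smul_eq_mul, ZMod.val_cast_of_lt hl] at heval
  exact_mod_cast heval

theorem orderOf_two_zmod_five : orderOf (2 : ZMod 5) = 4 :=
  orderOf_eq_prime_pow (p := 2) (n := 1) (by decide) (by decide)

theorem stmt_6 (x y : ℕ) (hxy : x ≤ y) :
    newmanSum 5 0 (32 * y) - newmanSum 5 0 (32 * x) =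
      5 * (newmanSum 5 0 (2 * y) - newmanSum 5 0 (2 * x)) := by
  have hscale := stmt_6_general Nat.prime_five orderOf_two_zmod_five (by norm_num : 0 < 5)
  linear_combination hscale y - hscale x
end

section
/- For all natural numbers x ≤ y, S_{9,0}([512x,512y)) = 3·S_{9,0}([128x,128y)) + 3·S_{9,0}([8x,8y)) − 9·S_{9,0}([2x,2y)), where S_{9,0}([a,b)) = S_{9,0}(b) − S_{9,0}(a). -/
/-!
Cutting `[0, 2^k x)` into blocks of length `2^k` factors the sign of `2^k q + r` as the sign of `q`
times that of `r`, so `S_{m,l}(2^k x)` is a sum over `q < x` whose weights are Newman sums over a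
single block. When `2^k ≡ 1 (mod m)` the weights depend only on `q mod m`. Evaluating them gives
`S_{9,l}(64x) = 3 S_{9,l}(x) + 8 S_{3,l}(x) - 3 S_{1,0}(x)`,
`S_{3,l}(4x) = 3 S_{3,l}(x) - S_{1,0}(x)` and `S_{1,0}(2x) = 0`.
Hence `S_{9,l}(128x) = 3 S_{9,l}(2x) + 8 S_{3,l}(2x)` and
`S_{9,l}(512x) = 3 S_{9,l}(8x) + 24 S_{3,l}(2x)`, and eliminating `S_{3,l}(2x)` gives the theorem.
-/

open Finset

theorem sum_digits_pow_mul_add {b k r : ℕ} (hb : 1 < b) (hr : r < b ^ k) (q : ℕ) :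
    (Nat.digits b (b ^ k * q + r)).sum = (Nat.digits b q).sum + (Nat.digits b r).sum := by
  rcases q.eq_zero_or_pos with rfl | hq
  · simp
  obtain ⟨j, rfl⟩ := Nat.exists_eq_add_of_le ((Nat.digits_length_le_iff hb r).2 hr)
  rw [add_comm (_ * q), ← Nat.digits_append_zeroes_append_digits hb hq]
  simp [add_comm]

/-- The Thue–Morse sequence with values `±1`: the summand `(-1)^{σ(n)}` of the Newman sums. -/
def thueMorse (n : ℕ) : ℤ := (-1) ^ (Nat.digits 2 n).sum

theorem thueMorse_two_pow_mul_add {k r : ℕ} (hr : r < 2 ^ k) (q : ℕ) :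
    thueMorse (2 ^ k * q + r) = thueMorse q * thueMorse r := by
  rw [thueMorse, sum_digits_pow_mul_add one_lt_two hr, pow_add, ← thueMorse, ← thueMorse]

theorem newmanSum_eq_sum_thueMorse (m l x : ℕ) :
    newmanSum m l x = ∑ n ∈ range x, if n % m = l then thueMorse n else 0 :=
  rfl

theorem newmanSum_two_pow_mul (m l k x : ℕ) :
    newmanSum m l (2 ^ k * x) = ∑ q ∈ range x, thueMorse q *
      ∑ r ∈ range (2 ^ k), if (2 ^ k * q + r) % m = l then thueMorse r else 0 := by
  induction x with
  | zero => simp [newmanSum]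
  | succ x ih =>
    rw [newmanSum_eq_sum_thueMorse] at ih ⊢
    rw [Nat.mul_succ, sum_range_add, ih, sum_range_succ _ x, mul_sum]
    congr 1
    refine sum_congr rfl fun r hr => ?_
    rw [thueMorse_two_pow_mul_add (mem_range.1 hr), mul_ite, mul_zero]

theorem newmanSum_two_pow_mul_of_modEq_one {m k : ℕ} (h : 2 ^ k ≡ 1 [MOD m]) (l x : ℕ) :
    newmanSum m l (2 ^ k * x) = ∑ q ∈ range x, thueMorse q *
      ∑ r ∈ range (2 ^ k), if (q % m + r) % m = l then thueMorse r else 0 := by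
  have block_residue (q r : ℕ) : (2 ^ k * q + r) % m = (q % m + r) % m := by
    have hq : 2 ^ k * q ≡ q [MOD m] := by simpa only [one_mul] using h.mul_right q
    exact (hq.trans (q.mod_modEq m).symm).add_right r
  simp only [newmanSum_two_pow_mul, block_residue]

theorem newmanSum_one_two_mul (x : ℕ) : newmanSum 1 0 (2 * x) = 0 := by
  rw [← pow_one 2, newmanSum_two_pow_mul]
  simp [Nat.mod_one, sum_range_succ, thueMorse]

-- The generating polynomial `(1 - X)(1 - X²)` of a block is `3` at the primitive cube roots of
-- unity and `0` at `1`, hence `3 - (1 + X + X²)` modulo `X³ - 1`.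
theorem sum_block_mod_three : ∀ a < 3, ∀ l < 3,
    (∑ r ∈ range (2 ^ 2), if (a + r) % 3 = l then thueMorse r else 0) =
      3 * (if a = l then 1 else 0) - 1 := by
  decide

-- The generating polynomial `∏_{j < 6} (1 - X ^ 2 ^ j)` of a block is `3` at the primitive ninth
-- roots of unity, `27` at the primitive cube roots and `0` at `1`, which determines it modulo
-- `X⁹ - 1`.
theorem sum_block_mod_nine : ∀ a < 9, ∀ l < 9,
    (∑ r ∈ range (2 ^ 6), if (a + r) % 9 = l then thueMorse r else 0) =
      3 * (if a = l then 1 else 0) + 8 * (if a % 3 = l % 3 then 1 else 0) - 3 := by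
  decide

theorem newmanSum_three_four_mul {l : ℕ} (hl : l < 3) (x : ℕ) :
    newmanSum 3 l (4 * x) = 3 * newmanSum 3 l x - newmanSum 1 0 x := by
  rw [show 4 = 2 ^ 2 by rfl, newmanSum_two_pow_mul_of_modEq_one (by decide)]
  simp only [newmanSum_eq_sum_thueMorse, mul_sum, ← sum_sub_distrib, Nat.mod_one, if_true]
  refine sum_congr rfl fun q _ => ?_
  rw [← mul_sum, sum_block_mod_three _ (q.mod_lt three_pos) l hl]
  split_ifs <;> ring

theorem newmanSum_nine_sixtyFour_mul {l : ℕ} (hl : l < 9) (x : ℕ) :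
    newmanSum 9 l (64 * x) =
      3 * newmanSum 9 l x + 8 * newmanSum 3 (l % 3) x - 3 * newmanSum 1 0 x := by
  rw [show 64 = 2 ^ 6 by rfl, newmanSum_two_pow_mul_of_modEq_one (by decide)]
  simp only [newmanSum_eq_sum_thueMorse, mul_sum (range x), ← sum_sub_distrib, ← sum_add_distrib,
    Nat.mod_one, if_true]
  refine sum_congr rfl fun q _ => ?_
  rw [sum_block_mod_nine _ (q.mod_lt (by norm_num)) l hl, Nat.mod_mod_of_dvd q (by norm_num)]
  split_ifs <;> ring

theorem newmanSum_three_eight_mul {l : ℕ} (hl : l < 3) (x : ℕ) :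
    newmanSum 3 l (8 * x) = 3 * newmanSum 3 l (2 * x) := by
  rw [show 8 * x = 4 * (2 * x) by ring, newmanSum_three_four_mul hl, newmanSum_one_two_mul,
    sub_zero]

theorem newmanSum_nine_oneHundredTwentyEight_mul {l : ℕ} (hl : l < 9) (x : ℕ) :
    newmanSum 9 l (128 * x) = 3 * newmanSum 9 l (2 * x) + 8 * newmanSum 3 (l % 3) (2 * x) := by
  rw [show 128 * x = 64 * (2 * x) by ring, newmanSum_nine_sixtyFour_mul hl, newmanSum_one_two_mul,
    mul_zero, sub_zero]

theorem stmt_8_general {l : ℕ} (hl : l < 9) (x : ℕ) :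
    newmanSum 9 l (512 * x) =
      3 * newmanSum 9 l (128 * x) + 3 * newmanSum 9 l (8 * x) - 9 * newmanSum 9 l (2 * x) := by
  have h128 := newmanSum_nine_oneHundredTwentyEight_mul hl x
  have h512 : newmanSum 9 l (512 * x) =
      3 * newmanSum 9 l (8 * x) + 24 * newmanSum 3 (l % 3) (2 * x) := by
    calc newmanSum 9 l (512 * x)
      _ = newmanSum 9 l (64 * (2 * (4 * x))) := by ring_nf
      _ = 3 * newmanSum 9 l (8 * x) + 8 * newmanSum 3 (l % 3) (8 * x) := by
        rw [newmanSum_nine_sixtyFour_mul hl, newmanSum_one_two_mul]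
        ring_nf
      _ = 3 * newmanSum 9 l (8 * x) + 24 * newmanSum 3 (l % 3) (2 * x) := by
        rw [newmanSum_three_eight_mul (l.mod_lt three_pos)]
        ring
  linear_combination h512 - 3 * h128

theorem stmt_8 (x y : ℕ) (hxy : x ≤ y) :
    newmanSum 9 0 (512 * y) - newmanSum 9 0 (512 * x) =
      3 * (newmanSum 9 0 (128 * y) - newmanSum 9 0 (128 * x)) +
        3 * (newmanSum 9 0 (8 * y) - newmanSum 9 0 (8 * x)) -
          9 * (newmanSum 9 0 (2 * y) - newmanSum 9 0 (2 * x)) := by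
  linear_combination stmt_8_general (Nat.succ_pos 8) y - stmt_8_general (Nat.succ_pos 8) x
end
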